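/- arXiv:2307.15512 — 2 statements merged into one kernel-verified Lean document; each statement's English description precedes it below -/
import Mathlib

section
/- Let k ≥ 2 be an integer, let 0 < ξ ≤ 1 be a constant, and let G be a ξ-expanding k-graph on n vertices. Then the cop number of G satisfies c(G) ≤ 20 · ξ^{-2} · √(n/k) · log n. -/
open scoped BigOperators

/-- A `k`-uniform hypergraph on vertex set `Fin n`. -/
structure KGraph (n k : ℕ) where
  edges : Finset (Finset (Fin n))
  uniform : ∀ e ∈ edges, e.card = k

namespace KGraph

variable {n k : ℕ}

/-- A loose path of edges from `x` to `y`: a nonempty list of edges, the first containing `x`,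
the last containing `y`, with consecutive edges intersecting. -/
def IsLoosePath (G : KGraph n k) (x y : Fin n) (l : List (Finset (Fin n))) : Prop :=
  l ≠ [] ∧ (∀ e ∈ l, e ∈ G.edges) ∧ (∀ e ∈ l.head?, x ∈ e) ∧
    (∀ e ∈ l.getLast?, y ∈ e) ∧ l.Chain' (fun e f => (e ∩ f).Nonempty)

/-- Distance between two vertices: the smallest length of a loose path between them
(`0` if they are equal, `⊤` if there is no such path). -/
noncomputable def dist (G : KGraph n k) (x y : Fin n) : ℕ∞ :=
  if x = y then 0
  else sInf ((fun l : List (Finset (Fin n)) => (l.length : ℕ∞)) '' {l | G.IsLoosePath x y l})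

/-- Distance between two sets of vertices: the minimum over pairs. -/
noncomputable def setDist (G : KGraph n k) (A B : Set (Fin n)) : ℕ∞ :=
  ⨅ (x ∈ A) (y ∈ B), G.dist x y

/-- The closed `r`-th vertex-neighbourhood of a set of vertices. -/
noncomputable def vNhd (G : KGraph n k) (A : Set (Fin n)) (r : ℕ) : Set (Fin n) :=
  {v | G.setDist A {v} ≤ (r : ℕ∞)}

/-- The set of vertices covered by a set of edges. -/
def VB (B : Set (Finset (Fin n))) : Set (Fin n) :=
  ⋃ e ∈ B, (e : Set (Fin n))

/-- The closed `r`-th vertex-neighbourhood of a set of edges. -/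
noncomputable def vNhdE (G : KGraph n k) (B : Set (Finset (Fin n))) (r : ℕ) : Set (Fin n) :=
  G.vNhd (VB B) r

/-- The closed `r`-th edge-neighbourhood of a set of vertices: edges within distance `r - 1`. -/
noncomputable def eNhd (G : KGraph n k) (A : Set (Fin n)) (r : ℕ) : Set (Finset (Fin n)) :=
  {e | e ∈ G.edges ∧ G.setDist (e : Set (Fin n)) A ≤ ((r - 1 : ℕ) : ℕ∞)}

/-- The average vertex degree of `G`. -/
noncomputable def avgDeg (G : KGraph n k) : ℝ :=
  (∑ v : Fin n, ((G.vNhd {v} 1).ncard : ℝ)) / n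

/-- A `k`-graph on `n` vertices with average vertex degree `d ≥ k` is `ξ`-expanding if
(A.1) edge-neighbourhoods of vertices are not too large, (A.2) vertex-neighbourhoods of vertex
sets have size comparable to `|A| d^r`, and (A.3) vertex-neighbourhoods of edge sets are large. -/
def IsExpanding (G : KGraph n k) (ξ : ℝ) : Prop :=
  (k : ℝ) ≤ G.avgDeg ∧
  (∀ v : Fin n, ∀ r : ℕ, 1 ≤ r → G.avgDeg ^ r ≤ Real.sqrt ((n : ℝ) * k) →
    ((G.eNhd {v} r).ncard : ℝ) ≤ ξ⁻¹ * G.avgDeg ^ r / k) ∧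
  (∀ A : Set (Fin n), ∀ r : ℕ, 1 ≤ r →
    ξ * min ((A.ncard : ℝ) * G.avgDeg ^ r) (n : ℝ) ≤ ((G.vNhd A r).ncard : ℝ) ∧
    ((G.vNhd A r).ncard : ℝ) ≤ ξ⁻¹ * (A.ncard : ℝ) * G.avgDeg ^ r) ∧
  (∀ B : Set (Finset (Fin n)), B ⊆ (G.edges : Set (Finset (Fin n))) → ∀ r : ℕ, 1 ≤ r →
    ξ * min ((B.ncard : ℝ) * k * G.avgDeg ^ r) (n : ℝ) ≤ ((G.vNhdE B r).ncard : ℝ))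

/-- `CopsWin G c r` : with the cops currently on the vertices `c i`, the robber on `r`, and the
cops to move, the cops have a strategy to catch the robber. Either a cop is already on the
robber's vertex; or the cops can move (each by distance at most 1) so that a cop lands on the
robber; or the cops can move so that whatever the robber's reply, the cops still win. -/
inductive CopsWin (G : KGraph n k) {m : ℕ} : (Fin m → Fin n) → Fin n → Prop
  | caught (c : Fin m → Fin n) (r : Fin n) (i : Fin m) (h : c i = r) : CopsWin G c r
  | stepCaught (c c' : Fin m → Fin n) (r : Fin n)
      (hmove : ∀ i, G.dist (c i) (c' i) ≤ 1) (i : Fin m) (h : c' i = r) : CopsWin G c r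
  | step (c c' : Fin m → Fin n) (r : Fin n)
      (hmove : ∀ i, G.dist (c i) (c' i) ≤ 1)
      (h : ∀ r' : Fin n, G.dist r r' ≤ 1 → CopsWin G c' r') : CopsWin G c r

/-- The cop number of `G` : the least `m` such that `m` cops can be initially placed so as to
catch the robber wherever he starts. -/
noncomputable def copNumber (G : KGraph n k) : ℕ :=
  sInf {m : ℕ | ∃ c₀ : Fin m → Fin n, ∀ r₀ : Fin n, CopsWin G c₀ r₀}

/-- `G` is connected if all pairs of vertices are at finite distance. -/
def Connected (G : KGraph n k) : Prop := ∀ x y : Fin n, G.dist x y ≠ ⊤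

end KGraph

open Classical in
/-- The probability that the binomial random `k`-uniform hypergraph `G^k(n,p)` (each `k`-subset
of `[n]` an edge independently with probability `p`) satisfies the property `Q`. -/
noncomputable def ghProb (n k : ℕ) (p : ℝ) (Q : KGraph n k → Prop) : ℝ :=
  ∑ E ∈ (Finset.powersetCard k (Finset.univ : Finset (Fin n))).powerset,
    if h : ∀ e ∈ E, e.card = k then
      (if Q ⟨E, h⟩ then
        p ^ E.card * (1 - p) ^ ((Finset.powersetCard k (Finset.univ : Finset (Fin n))).card - E.card)
      else 0)
    else 0

namespace CopAux

open Finset KGraph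

variable {n k : ℕ}

def Adj (G : KGraph n k) (x y : Fin n) : Prop := x = y ∨ ∃ e ∈ G.edges, x ∈ e ∧ y ∈ e

lemma Adj.symm' {G : KGraph n k} {x y : Fin n} (h : Adj G x y) : Adj G y x := by
  rcases h with h | ⟨e, he, hx, hy⟩
  · exact Or.inl h.symm
  · exact Or.inr ⟨e, he, hy, hx⟩

def Reach (G : KGraph n k) : ℕ → Fin n → Fin n → Prop
  | 0, x, y => x = y
  | r + 1, x, y => ∃ z, Adj G x z ∧ Reach G r z y

lemma reach_refl (G : KGraph n k) (r : ℕ) (x : Fin n) : Reach G r x x := by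
  induction r with
  | zero => rfl
  | succ r ih => exact ⟨x, Or.inl rfl, ih⟩

lemma reach_mono (G : KGraph n k) {r s : ℕ} (h : r ≤ s) {x y : Fin n} (hr : Reach G r x y) :
    Reach G s x y := by
  induction s generalizing r x with
  | zero => obtain rfl : r = 0 := by omega
            exact hr
  | succ s ih =>
    cases r with
    | zero => have : x = y := hr
              subst this; exact reach_refl G _ _
    | succ r =>
      obtain ⟨z, hz, hr⟩ := hr
      exact ⟨z, hz, ih (by omega) hr⟩

lemma reach_snoc (G : KGraph n k) {r : ℕ} {x y z : Fin n} (h : Reach G r x y) (h' : Adj G y z) :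
    Reach G (r + 1) x z := by
  induction r generalizing x with
  | zero => have : x = y := h
            subst this; exact ⟨z, h', rfl⟩
  | succ r ih =>
    obtain ⟨w, hw, hr⟩ := h
    exact ⟨w, hw, ih hr⟩

lemma reach_symm (G : KGraph n k) {r : ℕ} {x y : Fin n} (h : Reach G r x y) : Reach G r y x := by
  induction r generalizing x with
  | zero => exact Eq.symm h
  | succ r ih =>
    obtain ⟨w, hw, hr⟩ := h
    exact reach_snoc G (ih hr) hw.symm'

lemma reach_unsnoc (G : KGraph n k) {r : ℕ} {x z : Fin n} (h : Reach G (r + 1) x z) :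
    ∃ y, Reach G r x y ∧ Adj G y z := by
  obtain ⟨y, hy, hr⟩ := reach_symm G h
  exact ⟨y, reach_symm G hr, hy.symm'⟩

lemma path_reach (G : KGraph n k) (l : List (Finset (Fin n))) (x y : Fin n)
    (h : G.IsLoosePath x y l) : Reach G l.length x y := by
  induction l generalizing x with
  | nil => exact absurd rfl h.1
  | cons e l ih =>
    obtain ⟨_, h1, h2, h3, h4⟩ := h
    cases l with
    | nil =>
      refine ⟨y, Or.inr ⟨e, h1 e (by simp), h2 e (by simp), h3 e (by simp)⟩, rfl⟩
    | cons f l =>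
      have h4' : List.IsChain (fun e f : Finset (Fin n) => (e ∩ f).Nonempty) (e :: f :: l) := h4
      rw [List.isChain_cons_cons] at h4'
      obtain ⟨⟨z, hz⟩, h5⟩ := h4'
      rw [Finset.mem_inter] at hz
      refine ⟨z, Or.inr ⟨e, h1 e (by simp), h2 e (by simp), hz.1⟩, ih z ⟨by simp, ?_, ?_, ?_, h5⟩⟩
      · intro g hg; exact h1 g (List.mem_cons_of_mem _ hg)
      · intro g hg
        simp at hg
        subst hg; exact hz.2
      · intro g hg
        apply h3
        simpa using hg

lemma reach_path (G : KGraph n k) (r : ℕ) (x y : Fin n) (h : Reach G r x y) :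
    x = y ∨ ∃ l, G.IsLoosePath x y l ∧ l.length ≤ r := by
  induction r generalizing x with
  | zero => exact Or.inl h
  | succ r ih =>
    obtain ⟨z, hz, hr⟩ := h
    rcases hz with rfl | ⟨e, he, hx, hz⟩
    · rcases ih _ hr with h | ⟨l, hl, hlen⟩
      · exact Or.inl h
      · exact Or.inr ⟨l, hl, by omega⟩
    · right
      rcases ih _ hr with rfl | ⟨l, hl, hlen⟩
      · refine ⟨[e], ⟨by simp, by simpa using he, by simpa using hx, by simpa using hz, ?_⟩, by simp⟩
        exact List.isChain_singleton _
      · refine ⟨e :: l, ?_, by simpa using hlen⟩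
        obtain ⟨h0, h1, h2, h3, h4⟩ := hl
        cases l with
        | nil => exact absurd rfl h0
        | cons f l =>
          refine ⟨by simp, ?_, by simpa using hx, ?_, ?_⟩
          · intro g hg
            rcases List.mem_cons.1 hg with rfl | hg
            · exact he
            · exact h1 g hg
          · intro g hg
            apply h3
            simpa using hg
          · show List.IsChain _ _
            rw [List.isChain_cons_cons]
            exact ⟨⟨z, Finset.mem_inter.2 ⟨hz, h2 f (by simp)⟩⟩, h4⟩

lemma dist_le_iff (G : KGraph n k) (r : ℕ) (x y : Fin n) :
    G.dist x y ≤ (r : ℕ∞) ↔ Reach G r x y := by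
  constructor
  · intro h
    unfold KGraph.dist at h
    split_ifs at h with hxy
    · subst hxy; exact reach_refl G _ _
    · rw [← ENat.lt_add_one_iff (ENat.natCast_ne_top r), sInf_lt_iff] at h
      obtain ⟨_, ⟨l, hl, rfl⟩, hlt⟩ := h
      rw [ENat.lt_add_one_iff (ENat.natCast_ne_top r)] at hlt
      have hlt' : (l.length : ℕ∞) ≤ (r : ℕ∞) := hlt
      exact reach_mono G (by exact_mod_cast hlt') (path_reach G l x y hl)
  · intro h
    unfold KGraph.dist
    split_ifs with hxy
    · simp
    · rcases reach_path G r x y h with h | ⟨l, hl, hlen⟩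
      · exact absurd h hxy
      · have hlen' : (l.length : ℕ∞) ≤ (r : ℕ∞) := by exact_mod_cast hlen
        refine le_trans (sInf_le ?_) hlen'
        exact ⟨l, hl, rfl⟩

lemma dist_le_one_iff (G : KGraph n k) (x y : Fin n) :
    G.dist x y ≤ 1 ↔ Adj G x y := by
  have := dist_le_iff G 1 x y
  rw [Nat.cast_one] at this
  rw [this]
  constructor
  · rintro ⟨z, hz, h⟩
    have : z = y := h
    subst this; exact hz
  · intro h; exact ⟨y, h, rfl⟩

lemma setDist_le_iff (G : KGraph n k) (A B : Set (Fin n)) (r : ℕ) :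
    G.setDist A B ≤ (r : ℕ∞) ↔ ∃ x ∈ A, ∃ y ∈ B, Reach G r x y := by
  unfold KGraph.setDist
  rw [← ENat.lt_add_one_iff (ENat.natCast_ne_top r)]
  simp only [iInf_lt_iff, exists_prop]
  simp only [ENat.lt_add_one_iff (ENat.natCast_ne_top r), dist_le_iff]

lemma mem_vNhd (G : KGraph n k) (A : Set (Fin n)) (r : ℕ) (v : Fin n) :
    v ∈ G.vNhd A r ↔ ∃ x ∈ A, Reach G r x v := by
  simp only [KGraph.vNhd, Set.mem_ofPred_eq, setDist_le_iff]
  simp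

lemma mem_eNhd (G : KGraph n k) (v : Fin n) (r : ℕ) (e : Finset (Fin n)) :
    e ∈ G.eNhd {v} r ↔ e ∈ G.edges ∧ ∃ x ∈ e, Reach G (r - 1) x v := by
  simp only [KGraph.eNhd, Set.mem_ofPred_eq, setDist_le_iff]
  simp

lemma reach_fun (G : KGraph n k) {r : ℕ} {x y : Fin n} (h : Reach G r x y) :
    ∃ p : ℕ → Fin n, p 0 = x ∧ p r = y ∧ ∀ j, Adj G (p j) (p (j + 1)) := by
  induction r generalizing x with
  | zero => exact ⟨fun _ => x, rfl, h, fun _ => Or.inl rfl⟩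
  | succ r ih =>
    obtain ⟨z, hz, hr⟩ := h
    obtain ⟨p, h0, h1, h2⟩ := ih hr
    refine ⟨fun j => Nat.casesOn j x p, rfl, h1, ?_⟩
    intro j
    cases j with
    | zero => show Adj G x (p 0)
              rw [h0]; exact hz
    | succ j => exact h2 j

lemma win_of_paths (G : KGraph n k) {m : ℕ} (r : ℕ) (p : ℕ → Fin m → Fin n)
    (hp : ∀ j i, Adj G (p j i) (p (j + 1) i)) (v : Fin n)
    (hw : ∀ w, Reach G r v w → CopsWin G (p r) w) : CopsWin G (p 0) v := by
  induction r generalizing p v with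
  | zero => exact hw v rfl
  | succ r ih =>
    refine CopsWin.step _ (p 1) v (fun i => (dist_le_one_iff G _ _).2 (hp 0 i)) ?_
    intro v' hv'
    refine ih (fun j => p (j + 1)) (fun j i => hp (j + 1) i) v' ?_
    intro w hw'
    exact hw w ⟨v', (dist_le_one_iff G _ _).1 hv', hw'⟩

lemma assign (G : KGraph n k) {m : ℕ} {T : Type*} (g : T → Fin m) (hg : Function.Injective g)
    (c : Fin m → Fin n) (r : ℕ) (R : T → Fin n → Prop)
    (h : ∀ t, ∃ y, R t y ∧ Reach G r (c (g t)) y) :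
    ∃ p : ℕ → Fin m → Fin n, p 0 = c ∧ (∀ j i, Adj G (p j i) (p (j + 1) i)) ∧
      ∀ t, R t (p r (g t)) := by
  have key : ∀ i, ∃ q : ℕ → Fin n, q 0 = c i ∧ (∀ j, Adj G (q j) (q (j + 1))) ∧
      ∀ t, g t = i → R t (q r) := by
    intro i
    by_cases hi : ∃ t, g t = i
    · obtain ⟨t, rfl⟩ := hi
      obtain ⟨y, hy, hr⟩ := h t
      obtain ⟨q, h0, h1, h2⟩ := reach_fun G hr
      refine ⟨q, h0, h2, ?_⟩
      intro t' ht'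
      rw [hg ht', h1]; exact hy
    · exact ⟨fun _ => c i, rfl, fun _ => Or.inl rfl, fun t ht => absurd ⟨t, ht⟩ hi⟩
  choose q h0 h1 h2 using key
  exact ⟨fun j i => q i j, funext h0, fun j i => h1 i j, fun t => h2 _ t rfl⟩

open Classical in
lemma exists_cops {m : ℕ} {T : Type} (hn : 2 ≤ n) (F : Fin n → Finset T)
    (N : T → Finset (Fin n)) (hF : ∀ v, (F v).card ≤ n)
    (h : ∀ v, ∀ S ⊆ F v, S.Nonempty →
      10 * (S.card : ℝ) * Real.log n * n ≤ m * ((S.biUnion N).card : ℝ)) :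
    ∃ c : Fin m → Fin n, ∀ v, ∀ S ⊆ F v,
      S.card ≤ (univ.filter (fun i => c i ∈ S.biUnion N)).card := by
  have hn0 : (0 : ℝ) < n := by positivity
  have hn2 : (2 : ℝ) ≤ n := by exact_mod_cast hn
  set f : Finset T → Fin n → ℝ := fun S x => if x ∈ S.biUnion N then 1 / 2 else 1 with hf
  have hsumf : ∀ S, ∑ x, f S x = n - ((S.biUnion N).card : ℝ) / 2 := by
    intro S
    have : ∀ x, f S x = 1 - (if x ∈ S.biUnion N then (1 / 2 : ℝ) else 0) := by
      intro x; simp only [hf]; split_ifs <;> norm_num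
    simp only [this, Finset.sum_sub_distrib, Finset.sum_ite_mem]
    simp
    ring
  have hprod : ∀ S (c : Fin m → Fin n), ∏ i, f S (c i)
      = (1 / 2 : ℝ) ^ (univ.filter (fun i => c i ∈ S.biUnion N)).card := by
    intro S c
    simp only [hf]
    rw [Finset.prod_ite]
    simp
  set x : ℝ := ((n : ℝ)⁻¹) ^ 4 with hx
  have hx0 : 0 ≤ x := by positivity
  have hS : ∀ v, ∀ S ⊆ F v, S.Nonempty →
      2 ^ S.card * (∑ y, f S y) ^ m ≤ x ^ S.card * (n : ℝ) ^ m := by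
    intro v S hSF hne
    rw [hsumf]
    set b : ℝ := ((S.biUnion N).card : ℝ) with hb
    have hbn : b ≤ n := by
      rw [hb]; exact_mod_cast (Finset.card_le_univ _).trans (by simp)
    have h1 : (n : ℝ) - b / 2 ≤ n * Real.exp (-(b / (2 * n))) := by
      have := Real.add_one_le_exp (-(b / (2 * n)))
      calc (n : ℝ) - b / 2 = n * (-(b / (2 * n)) + 1) := by field_simp; ring
        _ ≤ _ := by gcongr
    have h2 : ((n : ℝ) - b / 2) ^ m ≤ n ^ m * Real.exp (-(b / (2 * n))) ^ m := by
      rw [← mul_pow]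
      exact pow_le_pow_left₀ (by linarith) h1 m
    have h3 : Real.exp (-(b / (2 * n))) ^ m ≤ (((n : ℝ)⁻¹) ^ 5) ^ S.card := by
      have e1 : (n : ℝ)⁻¹ = Real.exp (-Real.log n) := by
        rw [Real.exp_neg, Real.exp_log hn0]
      rw [e1, ← Real.exp_nat_mul, ← Real.exp_nat_mul, ← Real.exp_nat_mul]
      apply Real.exp_le_exp.2
      have := h v S hSF hne
      have h4 : 10 * (S.card : ℝ) * Real.log n ≤ m * b / n := by
        rw [le_div_iff₀ hn0]; exact this
      have h5 : (m : ℝ) * -(b / (2 * n)) = - (m * b / n) / 2 := by field_simp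
      rw [h5]
      push_cast
      linarith
    have h6 : (2 : ℝ) ^ S.card * (((n : ℝ)⁻¹) ^ 5) ^ S.card ≤ x ^ S.card := by
      rw [← mul_pow]
      apply pow_le_pow_left₀ (by positivity)
      rw [hx, pow_succ _ 4]
      have : 2 * (n : ℝ)⁻¹ ≤ 1 := by
        rw [← div_eq_mul_inv, div_le_one hn0]; exact hn2
      nlinarith [hx0]
    calc 2 ^ S.card * ((n : ℝ) - b / 2) ^ m
        ≤ 2 ^ S.card * (n ^ m * (((n : ℝ)⁻¹) ^ 5) ^ S.card) := by
          gcongr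
          exact h2.trans (by gcongr)
      _ = (2 ^ S.card * (((n : ℝ)⁻¹) ^ 5) ^ S.card) * n ^ m := by ring
      _ ≤ _ := by gcongr
  set Φ : (Fin m → Fin n) → ℝ := fun c => ∑ v, ∑ S ∈ (F v).powerset.erase ∅,
    2 ^ S.card * ∏ i, f S (c i) with hΦ
  have hv : ∀ v, ∑ S ∈ (F v).powerset.erase ∅, x ^ S.card ≤ 2 * (n * x) := by
    intro v
    have h1 : ∑ S ∈ (F v).powerset, x ^ S.card = (x + 1) ^ (F v).card := by
      rw [← Finset.sum_pow_mul_eq_add_pow]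
      simp
    have h2 : ∑ S ∈ (F v).powerset.erase ∅, x ^ S.card = (x + 1) ^ (F v).card - 1 := by
      rw [← h1, ← Finset.sum_erase_add _ _ (Finset.empty_mem_powerset (F v))]
      simp
    have h3 : (x + 1) ^ (F v).card ≤ Real.exp (n * x) := by
      calc (x + 1) ^ (F v).card ≤ (x + 1) ^ n := pow_le_pow_right₀ (by linarith) (hF v)
        _ ≤ Real.exp x ^ n := pow_le_pow_left₀ (by linarith) (Real.add_one_le_exp x) n
        _ = _ := by rw [← Real.exp_nat_mul]
    have hnx : (n : ℝ) * x ≤ 1 := by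
      have : (n : ℝ) * x = ((n : ℝ)⁻¹) ^ 3 := by rw [hx]; field_simp
      rw [this]
      apply pow_le_one₀ (by positivity)
      exact inv_le_one_of_one_le₀ (by linarith)
    have h4 := Real.abs_exp_sub_one_le (x := n * x) (by rw [abs_of_nonneg (by positivity)]; exact hnx)
    rw [abs_of_nonneg (by positivity : 0 ≤ (n : ℝ) * x)] at h4
    have := le_abs_self (Real.exp (n * x) - 1)
    linarith
  have hsum : ∑ c, Φ c < ∑ c : Fin m → Fin n, (1 : ℝ) := by
    have e0 : ∑ c : Fin m → Fin n, (1 : ℝ) = (n : ℝ) ^ m := by simp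
    have e1 : ∑ c, Φ c = ∑ v, ∑ S ∈ (F v).powerset.erase ∅, 2 ^ S.card * (∑ y, f S y) ^ m := by
      simp only [hΦ]
      rw [Finset.sum_comm]
      refine Finset.sum_congr rfl fun v _ => ?_
      rw [Finset.sum_comm]
      refine Finset.sum_congr rfl fun S _ => ?_
      rw [← Finset.mul_sum]
      congr 1
      have := Finset.prod_univ_sum (fun _ : Fin m => (univ : Finset (Fin n))) (fun _ y => f S y)
      simp only [Finset.prod_const, Finset.card_univ, Fintype.card_fin, Fintype.piFinset_univ] at this
      exact this.symm
    rw [e0, e1]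
    calc _ ≤ ∑ v, ∑ S ∈ (F v).powerset.erase ∅, x ^ S.card * (n : ℝ) ^ m := by
          refine Finset.sum_le_sum fun v _ => Finset.sum_le_sum fun S hS' => ?_
          rw [Finset.mem_erase, Finset.mem_powerset] at hS'
          exact hS v S hS'.2 (Finset.nonempty_iff_ne_empty.2 hS'.1)
      _ = ∑ v, (∑ S ∈ (F v).powerset.erase ∅, x ^ S.card) * (n : ℝ) ^ m := by
          simp only [Finset.sum_mul]
      _ ≤ ∑ v : Fin n, (2 * (n * x)) * (n : ℝ) ^ m := by
          refine Finset.sum_le_sum fun v _ => ?_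
          have := hv v
          gcongr
      _ = (2 * ((n : ℝ)⁻¹) ^ 2) * (n : ℝ) ^ m := by
          simp [hx]; field_simp
      _ < 1 * (n : ℝ) ^ m := by
          have hpos : (0 : ℝ) < (n : ℝ) ^ m := by positivity
          apply mul_lt_mul_of_pos_right _ hpos
          have h1 : (n : ℝ)⁻¹ ≤ 2⁻¹ := inv_anti₀ (by norm_num) hn2
          have h2 : (0 : ℝ) < (n : ℝ)⁻¹ := by positivity
          nlinarith
      _ = _ := one_mul _
  obtain ⟨c, -, hc⟩ := Finset.exists_lt_of_sum_lt hsum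
  refine ⟨c, ?_⟩
  intro v S hSF
  rcases S.eq_empty_or_nonempty with rfl | hne
  · simp
  by_contra hlt
  push Not at hlt
  have hnn : ∀ S, 0 ≤ 2 ^ S.card * ∏ i, f S (c i) := by
    intro S; rw [hprod]; positivity
  have h1 : 2 ^ S.card * ∏ i, f S (c i) ≤ Φ c := by
    simp only [hΦ]
    refine le_trans ?_ (Finset.single_le_sum (f := fun v => ∑ S ∈ (F v).powerset.erase ∅,
      2 ^ S.card * ∏ i, f S (c i)) (fun v _ => Finset.sum_nonneg fun S _ => hnn S) (mem_univ v))
    exact Finset.single_le_sum (f := fun S => 2 ^ S.card * ∏ i, f S (c i)) (fun S _ => hnn S)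
      (by rw [Finset.mem_erase, Finset.mem_powerset]; exact ⟨hne.ne_empty, hSF⟩)
  rw [hprod] at h1
  have h2 : (1 : ℝ) ≤ 2 ^ S.card * (1 / 2 : ℝ) ^ (univ.filter (fun i => c i ∈ S.biUnion N)).card := by
    rw [one_div, inv_pow, ← div_eq_mul_inv, le_div_iff₀ (by positivity), one_mul]
    exact pow_le_pow_right₀ (by norm_num) hlt.le
  linarith

lemma exists_assign {m : ℕ} {T : Type} (hn : 2 ≤ n) (F : Fin n → Finset T)
    (N : T → Set (Fin n)) (hF : ∀ v, (F v).card ≤ n)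
    (h : ∀ v, ∀ S ⊆ F v, S.Nonempty →
      10 * (S.card : ℝ) * Real.log n * n ≤ m * ((⋃ t ∈ S, N t).ncard : ℝ)) :
    ∃ c : Fin m → Fin n, ∀ v, ∃ g : F v → Fin m, Function.Injective g ∧
      ∀ t, c (g t) ∈ N t.1 := by
  classical
  have hNe : ∀ S : Finset T, ((S.biUnion (fun t => (N t).toFinset)).card : ℝ)
      = ((⋃ t ∈ S, N t).ncard : ℝ) := by
    intro S
    rw [← Set.ncard_coe_finset]
    simp
  obtain ⟨c, hc⟩ := exists_cops (m := m) hn F (fun t => (N t).toFinset) hF (by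
    intro v S hS hne
    rw [hNe]; exact h v S hS hne)
  refine ⟨c, fun v => ?_⟩
  have hall := (Finset.all_card_le_biUnion_card_iff_exists_injective
    (fun t : F v => univ.filter (fun i => c i ∈ N t.1))).1 ?_
  · obtain ⟨g, hg, hg'⟩ := hall
    exact ⟨g, hg, fun t => by simpa using hg' t⟩
  · intro S
    have := hc v (S.map (Function.Embedding.subtype _)) (by
      intro t ht
      simp at ht
      exact ht.1)
    rw [Finset.card_map] at this
    refine this.trans (Finset.card_le_card ?_)
    intro i hi
    simp at hi ⊢
    obtain ⟨t, ⟨h1, h2⟩, h3⟩ := hi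
    exact ⟨t, ⟨h1, h2⟩, h3⟩

lemma biUnion_vNhd (G : KGraph n k) (S : Finset (Fin n)) (r : ℕ) :
    (⋃ t ∈ S, G.vNhd {t} r) = G.vNhd (S : Set (Fin n)) r := by
  ext x
  simp [mem_vNhd]

lemma biUnion_vNhdE (G : KGraph n k) (S : Finset (Finset (Fin n))) (r : ℕ) :
    (⋃ t ∈ S, G.vNhd (t : Set (Fin n)) r) = G.vNhdE (S : Set (Finset (Fin n))) r := by
  ext x
  simp only [KGraph.vNhdE, KGraph.VB, Set.mem_iUnion, mem_vNhd, exists_prop, Finset.mem_coe]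
  constructor
  · rintro ⟨e, he, y, hy, h⟩; exact ⟨y, ⟨e, he, hy⟩, h⟩
  · rintro ⟨y, ⟨e, he, hy⟩, h⟩; exact ⟨e, he, y, hy, h⟩

lemma caseB (G : KGraph n k) {m : ℕ} (hn : 2 ≤ n) (r : ℕ)
    (h : ∀ v, ∀ S : Finset (Fin n), (S : Set (Fin n)) ⊆ G.vNhd {v} r → S.Nonempty →
      10 * (S.card : ℝ) * Real.log n * n ≤ m * ((G.vNhd (S : Set (Fin n)) (r + 1)).ncard : ℝ)) :
    G.copNumber ≤ m := by
  classical
  obtain ⟨c, hc⟩ := exists_assign (m := m) hn (fun v => (G.vNhd {v} r).toFinset)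
    (fun u => G.vNhd {u} (r + 1)) (fun v => (Finset.card_le_univ _).trans (by simp)) (by
      intro v S hS hne
      rw [biUnion_vNhd]
      refine h v S ?_ hne
      intro x hx
      simpa using hS hx)
  refine Nat.sInf_le ⟨c, fun v => ?_⟩
  obtain ⟨g, hg, hg'⟩ := hc v
  obtain ⟨p, h0, h1, h2⟩ := assign G g hg c r (fun t y => Adj G y t.1) (by
    intro t
    have := hg' t
    rw [mem_vNhd] at this
    obtain ⟨x, hx, hr⟩ := this
    rw [Set.mem_singleton_iff] at hx
    subst hx
    obtain ⟨y, hy, hyr⟩ := reach_unsnoc G (reach_symm G hr)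
    exact ⟨y, hyr, hy⟩)
  rw [← h0]
  refine win_of_paths G r p h1 v ?_
  intro w hw
  have hwF : w ∈ (G.vNhd {v} r).toFinset := by
    rw [Set.mem_toFinset, mem_vNhd]
    exact ⟨v, rfl, hw⟩
  have := h2 ⟨w, hwF⟩
  set i := g ⟨w, hwF⟩
  refine CopsWin.stepCaught _ (Function.update (p r) i w) w ?_ i (by simp)
  intro j
  rw [dist_le_one_iff]
  by_cases hj : j = i
  · subst hj; simpa using this
  · simp [hj, Adj]

lemma caseA (G : KGraph n k) {m : ℕ} (hn : 2 ≤ n) (r : ℕ) (hr1 : 1 ≤ r)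
    (hiso : ∀ w, ∃ e ∈ G.edges, w ∈ e)
    (hcard : ∀ v, (G.eNhd {v} r).ncard ≤ n)
    (h : ∀ v, ∀ S : Finset (Finset (Fin n)), (S : Set (Finset (Fin n))) ⊆ G.eNhd {v} r →
      S.Nonempty → 10 * (S.card : ℝ) * Real.log n * n ≤
        m * ((G.vNhdE (S : Set (Finset (Fin n))) r).ncard : ℝ)) :
    G.copNumber ≤ m := by
  classical
  obtain ⟨c, hc⟩ := exists_assign (m := m) hn (fun v => (G.eNhd {v} r).toFinset)
    (fun e => G.vNhd (e : Set (Fin n)) r)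
    (fun v => by rw [← Set.ncard_eq_toFinset_card']; exact hcard v) (by
      intro v S hS hne
      rw [biUnion_vNhdE]
      refine h v S ?_ hne
      intro x hx
      simpa using hS hx)
  refine Nat.sInf_le ⟨c, fun v => ?_⟩
  obtain ⟨g, hg, hg'⟩ := hc v
  obtain ⟨p, h0, h1, h2⟩ := assign G g hg c r (fun t y => y ∈ t.1) (by
    intro t
    have := hg' t
    rw [mem_vNhd] at this
    obtain ⟨x, hx, hr⟩ := this
    exact ⟨x, hx, reach_symm G hr⟩)
  rw [← h0]
  refine win_of_paths G r p h1 v ?_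
  intro w hw
  have hex : ∃ e ∈ G.eNhd {v} r, w ∈ e := by
    obtain ⟨s, rfl⟩ : ∃ s, r = s + 1 := ⟨r - 1, by omega⟩
    obtain ⟨u, hu, huw⟩ := reach_unsnoc G hw
    have : ∃ e ∈ G.edges, u ∈ e ∧ w ∈ e := by
      rcases huw with rfl | h
      · obtain ⟨e, he, hue⟩ := hiso u
        exact ⟨e, he, hue, hue⟩
      · exact h
    obtain ⟨e, he, hue, hwe⟩ := this
    exact ⟨e, (mem_eNhd G v _ e).2 ⟨he, u, hue, reach_symm G hu⟩, hwe⟩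
  obtain ⟨e, he, hwe⟩ := hex
  have heF : e ∈ (G.eNhd {v} r).toFinset := by rwa [Set.mem_toFinset]
  have := h2 ⟨e, heF⟩
  set i := g ⟨e, heF⟩
  refine CopsWin.stepCaught _ (Function.update (p r) i w) w ?_ i (by simp)
  intro j
  rw [dist_le_one_iff]
  by_cases hj : j = i
  · subst hj
    simp only [Function.update_self]
    exact Or.inr ⟨e, ((mem_eNhd G v r e).1 he).1, this, hwe⟩
  · simp [hj, Adj]

lemma copNumber_le_n (G : KGraph n k) : G.copNumber ≤ n :=
  Nat.sInf_le ⟨id, fun r => CopsWin.caught _ _ r rfl⟩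

lemma reach_iso (G : KGraph n k) (w : Fin n) (hw : ∀ e ∈ G.edges, w ∉ e) (r : ℕ) (y : Fin n)
    (h : Reach G r w y) : y = w := by
  induction r with
  | zero => exact Eq.symm h
  | succ r ih =>
    obtain ⟨z, hz, hr⟩ := h
    rcases hz with rfl | ⟨e, he, h1, _⟩
    · exact ih hr
    · exact absurd h1 (hw e he)

theorem main (hk : 2 ≤ k) (ξ : ℝ) (hξ0 : 0 < ξ) (hξ1 : ξ ≤ 1)
    (G : KGraph n k) (hG : G.IsExpanding ξ) :
    (G.copNumber : ℝ) ≤ 20 * ξ⁻¹ ^ 2 * Real.sqrt ((n : ℝ) / k) * Real.log n := by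
  classical
  obtain ⟨hd, hA1, hA2, hA3⟩ := hG
  have hk2 : (2 : ℝ) ≤ k := by exact_mod_cast hk
  have hk0 : (0 : ℝ) < k := by linarith
  have hnpos : 0 < n := by
    rcases Nat.eq_zero_or_pos n with rfl | h
    · exfalso
      simp [KGraph.avgDeg] at hd
      omega
    · exact h
  have hn0 : (0 : ℝ) < n := by exact_mod_cast hnpos
  have hdn : G.avgDeg ≤ n := by
    unfold KGraph.avgDeg
    rw [div_le_iff₀ hn0]
    calc _ ≤ ∑ v : Fin n, (n : ℝ) := by
          refine Finset.sum_le_sum fun v _ => ?_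
          have := Set.ncard_le_ncard (Set.subset_univ (G.vNhd {v} 1))
          rw [Set.ncard_univ, Nat.card_eq_fintype_card, Fintype.card_fin] at this
          exact_mod_cast this
      _ = _ := by simp
  have hkn : (k : ℝ) ≤ n := hd.trans hdn
  have hn2 : (2 : ℝ) ≤ n := by linarith
  have hn : 2 ≤ n := by exact_mod_cast hn2
  set d := G.avgDeg with hddef
  set q := Real.sqrt ((n : ℝ) / k) with hq
  set L := Real.log n with hL
  have hq1 : 1 ≤ q := by
    rw [hq, Real.one_le_sqrt, one_le_div hk0]; exact hkn
  have hL1 : 0.69 ≤ L := by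
    have h1 := Real.log_le_log (by norm_num) hn2
    have := Real.log_two_gt_d9
    rw [← hL] at h1
    linarith
  have hξi : 1 ≤ ξ⁻¹ := (one_le_inv₀ hξ0).2 hξ1
  have hk_sq : k * q = Real.sqrt (n * k) := by
    rw [hq]
    have : (n : ℝ) * k = k ^ 2 * (n / k) := by field_simp
    rw [this, Real.sqrt_mul (by positivity), Real.sqrt_sq hk0.le]
  have hqq : q * Real.sqrt (n * k) = n := by
    rw [← hk_sq]
    have : q * q = n / k := Real.mul_self_sqrt (by positivity)
    calc q * (k * q) = k * (q * q) := by ring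
      _ = n := by rw [this]; field_simp
  set M := 20 * ξ⁻¹ ^ 2 * q * L with hM
  have hMq : ξ⁻¹ ^ 2 * q ≤ M / 13 := by
    have : 0 < ξ⁻¹ ^ 2 * q := by positivity
    have : ξ⁻¹ ^ 2 * q * 13 ≤ M := by rw [hM]; nlinarith
    linarith
  have hx2 : ξ⁻¹ ≤ ξ⁻¹ ^ 2 := by nlinarith
  by_cases hMn : (n : ℝ) ≤ M
  · exact le_trans (by exact_mod_cast copNumber_le_n G) hMn
  push Not at hMn
  have hM13 : 13 ≤ M := by nlinarith
  set m := ⌊M⌋₊ with hm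
  have hmM : (m : ℝ) ≤ M := Nat.floor_le (by linarith)
  have hmM' : M / 2 ≤ m := by
    have := Nat.lt_floor_add_one M
    rw [← hm] at this
    linarith
  have hclaim : ∀ s W : ℝ, 0 ≤ s → ξ * min (s * Real.sqrt (n * k)) n ≤ W → s ≤ ξ⁻¹ * q →
      10 * s * L * n ≤ m * W := by
    intro s W hs hW hsq
    have hmin0 : 0 ≤ min (s * Real.sqrt (n * k)) (n : ℝ) := le_min (by positivity) hn0.le
    have h1 : 10 * ξ⁻¹ * q * L * min (s * Real.sqrt (n * k)) n ≤ m * W := by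
      calc _ = (M / 2) * (ξ * min (s * Real.sqrt (n * k)) n) := by
            rw [hM]; field_simp; ring
        _ ≤ m * W := by
            apply mul_le_mul hmM' hW (by positivity) (by positivity)
    refine le_trans ?_ h1
    rcases min_cases (s * Real.sqrt (n * k)) (n : ℝ) with ⟨h, _⟩ | ⟨h, _⟩ <;> rw [h]
    · calc 10 * s * L * n = 1 * (10 * s * L * n) := by ring
        _ ≤ ξ⁻¹ * (10 * s * L * n) := by gcongr
        _ = ξ⁻¹ * (10 * s * L * (q * Real.sqrt (n * k))) := by rw [hqq]
        _ = _ := by ring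
    · calc 10 * s * L * n = s * (10 * L * n) := by ring
        _ ≤ (ξ⁻¹ * q) * (10 * L * n) := by gcongr
        _ = _ := by ring
  have hd1 : 1 < d := by linarith
  refine le_trans ?_ hmM
  have hsq1 : 1 ≤ Real.sqrt (n * k) := by rw [← hk_sq]; nlinarith
  obtain ⟨r, hr1, hr2⟩ := exists_nat_pow_near hsq1 hd1
  have hξmono : ∀ a b : ℝ, a ≤ b → ξ * min a n ≤ ξ * min b n := by
    intro a b hab
    gcongr
  by_cases hrq : d ^ r ≤ q
  · have := caseB G (m := m) hn r (by
      intro v S hS hne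
      refine hclaim _ _ (by positivity) ?_ ?_
      · refine le_trans (hξmono _ _ ?_) (hA2 S (r + 1) (by omega)).1
        rw [Set.ncard_coe_finset]
        gcongr
      · have hle : (S.card : ℝ) ≤ ((G.vNhd {v} r).ncard : ℝ) := by
          rw [← Set.ncard_coe_finset]
          exact_mod_cast Set.ncard_le_ncard hS
        refine hle.trans ?_
        rcases Nat.eq_zero_or_pos r with rfl | hrpos
        · have : G.vNhd {v} 0 = {v} := by
            ext x
            rw [mem_vNhd]
            simp [Reach, eq_comm]
          rw [this]
          simp
          nlinarith
        · refine (hA2 {v} r hrpos).2.trans ?_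
          simp
          gcongr)
    exact_mod_cast this
  · push Not at hrq
    have hrpos : 1 ≤ r := by
      rcases Nat.eq_zero_or_pos r with rfl | h
      · simp at hrq; linarith
      · exact h
    have hE : ∀ v, ((G.eNhd {v} r).ncard : ℝ) ≤ ξ⁻¹ * q := by
      intro v
      refine (hA1 v r hrpos hr1).trans ?_
      rw [div_le_iff₀ hk0]
      calc ξ⁻¹ * d ^ r ≤ ξ⁻¹ * Real.sqrt (n * k) := by gcongr
        _ = _ := by rw [← hk_sq]; ring
    have hxq : ξ⁻¹ * q ≤ n := by
      have : ξ⁻¹ * q ≤ ξ⁻¹ ^ 2 * q := by gcongr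
      linarith
    have := caseA G (m := m) hn r hrpos (by
      intro w
      by_contra hcon
      push Not at hcon
      obtain ⟨t, ht⟩ := pow_unbounded_of_one_lt (n : ℝ) hd1
      have h1 := (hA2 {w} (t + 1) (by omega)).1
      have h2 : G.vNhd {w} (t + 1) = {w} := by
        ext y
        rw [mem_vNhd]
        constructor
        · rintro ⟨x, hx, h⟩
          rw [Set.mem_singleton_iff] at hx
          subst hx
          exact reach_iso G x hcon _ y h
        · intro h
          exact ⟨w, rfl, h ▸ reach_refl G _ _⟩
      have h3 : (n : ℝ) ≤ d ^ (t + 1) := ht.le.trans (pow_le_pow_right₀ hd1.le (by omega))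
      rw [h2] at h1
      simp only [Set.ncard_singleton, Nat.cast_one, one_mul] at h1
      rw [min_eq_right h3] at h1
      have h4 : (n : ℝ) ≤ ξ⁻¹ := by
        rw [← one_div, le_div_iff₀ hξ0]; linarith
      have h5 : ξ⁻¹ ≤ ξ⁻¹ ^ 2 * q := by nlinarith
      linarith) (fun v => by exact_mod_cast (hE v).trans hxq) (by
      intro v S hS hne
      refine hclaim _ _ (by positivity) ?_ ?_
      · refine le_trans (hξmono _ _ ?_) (hA3 S ?_ r hrpos)
        · rw [Set.ncard_coe_finset, ← hk_sq, mul_assoc]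
          gcongr
        · intro e he
          exact ((mem_eNhd G v r e).1 (hS he)).1
      · refine le_trans ?_ (hE v)
        rw [← Set.ncard_coe_finset]
        exact_mod_cast Set.ncard_le_ncard hS)
    exact_mod_cast this

end CopAux

/-- a `ξ`-expanding `k`-graph on `n` vertices has cop number at most
`20 ξ⁻² √(n/k) log n`. -/
theorem cop_number_expanding_meyniel (n k : ℕ) (hk : 2 ≤ k) (ξ : ℝ) (hξ0 : 0 < ξ) (hξ1 : ξ ≤ 1)
    (G : KGraph n k) (hG : G.IsExpanding ξ) :
    (G.copNumber : ℝ) ≤ 20 * ξ⁻¹ ^ 2 * Real.sqrt ((n : ℝ) / k) * Real.log n := by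
  exact CopAux.main hk ξ hξ0 hξ1 G hG
end

section
/- Let k ≥ 2 be an integer, let 0 < ξ ≤ 1 be a constant, let G be a ξ-expanding k-graph on n vertices with average vertex degree d = d(G), and let j ∈ ℕ. If n^{1/(2j+1)} ≤ d ≤ (n/k)^{1/(2j)}, then, setting β = ⌈(n/d^{2j+1}) · log n⌉, the cop number of G satisfies c(G) ≤ 20 · ξ^{-2} · d^j · β. -/
open scoped BigOperators

namespace KGraph

variable {n k : ℕ}

/-- One step of the game. -/
def Stp (G : KGraph n k) (x y : Fin n) : Prop := x = y ∨ ∃ e ∈ G.edges, x ∈ e ∧ y ∈ e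

/-- Reachability in at most `t` steps. -/
def Rch (G : KGraph n k) : ℕ → Fin n → Fin n → Prop
  | 0, x, y => x = y
  | t + 1, x, y => ∃ z, G.Stp x z ∧ G.Rch t z y

lemma Rch.mono_succ (G : KGraph n k) {t : ℕ} {x y : Fin n} (h : G.Rch t x y) :
    G.Rch (t + 1) x y := ⟨x, Or.inl rfl, h⟩

lemma Rch.mono (G : KGraph n k) {s t : ℕ} (hst : s ≤ t) {x y : Fin n} (h : G.Rch s x y) :
    G.Rch t x y := by
  induction hst with
  | refl => exact h
  | step _ ih => exact Rch.mono_succ G ih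

lemma Rch.snoc (G : KGraph n k) {t : ℕ} {x y z : Fin n} (h : G.Rch t x y) (h2 : G.Stp y z) :
    G.Rch (t + 1) x z := by
  induction t generalizing x with
  | zero =>
    have hxy : x = y := h
    subst hxy
    exact ⟨z, h2, rfl⟩
  | succ t ih =>
    obtain ⟨w, hw, hwy⟩ := h
    exact ⟨w, hw, ih hwy⟩

lemma Stp.symm (G : KGraph n k) {x y : Fin n} (h : G.Stp x y) : G.Stp y x := by
  rcases h with h | ⟨e, he, hx, hy⟩
  · exact Or.inl h.symm
  · exact Or.inr ⟨e, he, hy, hx⟩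

lemma Rch.symm (G : KGraph n k) {t : ℕ} {x y : Fin n} (h : G.Rch t x y) : G.Rch t y x := by
  induction t generalizing x with
  | zero => exact Eq.symm h
  | succ t ih =>
    obtain ⟨w, hw, hwy⟩ := h
    exact Rch.snoc G (ih hwy) (Stp.symm G hw)

lemma rch_of_path (G : KGraph n k) (l : List (Finset (Fin n))) (x y : Fin n)
    (h : G.IsLoosePath x y l) : G.Rch l.length x y := by
  induction l generalizing x with
  | nil => exact absurd rfl h.1
  | cons e l ih =>
    obtain ⟨-, he, hx, hy, hc⟩ := h
    have hxe : x ∈ e := hx e (by simp)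
    have hee : e ∈ G.edges := he e (by simp)
    cases l with
    | nil =>
      have hye : y ∈ e := hy e (by simp)
      exact ⟨y, Or.inr ⟨e, hee, hxe, hye⟩, rfl⟩
    | cons f l =>
      have hc' := List.isChain_cons_cons.1 hc
      obtain ⟨z, hz⟩ := hc'.1
      rw [Finset.mem_inter] at hz
      refine ⟨z, Or.inr ⟨e, hee, hxe, hz.1⟩, ih z ⟨by simp, ?_, ?_, ?_, hc'.2⟩⟩
      · intro g hg
        exact he g (List.mem_cons_of_mem _ hg)
      · intro g hg
        simp at hg
        subst hg
        exact hz.2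
      · intro g hg
        apply hy g
        simpa using hg

lemma path_of_rch (G : KGraph n k) (t : ℕ) (x y : Fin n) (h : G.Rch t x y) :
    x = y ∨ ∃ l, G.IsLoosePath x y l ∧ l.length ≤ t := by
  induction t generalizing x with
  | zero => exact Or.inl h
  | succ t ih =>
    obtain ⟨z, hz, hzy⟩ := h
    rcases hz with rfl | ⟨e, he, hx, hze⟩
    · rcases ih x hzy with h | ⟨l, hl, hlt⟩
      · exact Or.inl h
      · exact Or.inr ⟨l, hl, by omega⟩
    · right
      rcases ih z hzy with rfl | ⟨l, hl, hlt⟩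
      · refine ⟨[e], ⟨by simp, by simpa using he, by simpa using hx, by simpa using hze, ?_⟩, by simp⟩
        exact List.isChain_singleton _
      · obtain ⟨h1, h2, h3, h4, h5⟩ := hl
        cases l with
        | nil => exact absurd rfl h1
        | cons f l =>
          refine ⟨e :: f :: l, ⟨by simp, ?_, by simpa using hx, ?_, ?_⟩, by simp at hlt ⊢; omega⟩
          · intro g hg
            rcases List.mem_cons.1 hg with rfl | hg
            · exact he
            · exact h2 g hg
          · intro g hg
            apply h4 g
            simpa using hg
          · exact List.isChain_cons_cons.2
              ⟨⟨z, Finset.mem_inter.2 ⟨hze, h3 f (by simp)⟩⟩, h5⟩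

lemma dist_le_iff (G : KGraph n k) (t : ℕ) (x y : Fin n) :
    G.dist x y ≤ (t : ℕ∞) ↔ G.Rch t x y := by
  constructor
  · intro h
    unfold dist at h
    split_ifs at h with hxy
    · subst hxy
      exact Rch.mono G (Nat.zero_le t) (show G.Rch 0 x x from rfl)
    · by_contra hcon
      have : ((t + 1 : ℕ) : ℕ∞) ≤ sInf ((fun l : List (Finset (Fin n)) => (l.length : ℕ∞)) ''
          {l | G.IsLoosePath x y l}) := by
        apply le_sInf
        rintro _ ⟨l, hl, rfl⟩
        have h1 := rch_of_path G l x y hl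
        simp only [Nat.cast_le]
        by_contra h2
        exact hcon (Rch.mono G (by omega) h1)
      have h3 := this.trans h
      rw [Nat.cast_le] at h3
      omega
  · intro h
    unfold dist
    split_ifs with hxy
    · simp
    · rcases path_of_rch G t x y h with h | ⟨l, hl, hlt⟩
      · exact absurd h hxy
      · refine le_trans (sInf_le ⟨l, hl, rfl⟩) ?_
        simpa using hlt

lemma mem_vNhd (G : KGraph n k) (A : Set (Fin n)) (r : ℕ) (v : Fin n) :
    v ∈ G.vNhd A r ↔ ∃ u ∈ A, G.Rch r u v := by
  unfold vNhd setDist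
  simp only [Set.mem_setOf_eq]
  constructor
  · intro h
    by_contra! hcon
    have : ((r + 1 : ℕ) : ℕ∞) ≤ ⨅ (x ∈ A) (y ∈ ({v} : Set (Fin n))), G.dist x y := by
      refine le_iInf₂ fun x hx => le_iInf₂ fun y hy => ?_
      rw [Set.mem_singleton_iff] at hy
      subst hy
      have h1 := hcon x hx
      rw [← dist_le_iff, not_le] at h1
      have := Order.add_one_le_of_lt h1
      simpa using this
    have h3 := this.trans h
    rw [Nat.cast_le] at h3
    omega
  · rintro ⟨u, hu, h⟩
    rw [← dist_le_iff] at h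
    exact le_trans (iInf₂_le_of_le u hu (iInf₂_le v (Set.mem_singleton v))) h

lemma rch_one (G : KGraph n k) (x y : Fin n) : G.Rch 1 x y ↔ G.Stp x y := by
  constructor
  · rintro ⟨z, hz, h⟩
    have : z = y := h
    subst this
    exact hz
  · intro h
    exact ⟨y, h, rfl⟩

lemma dist_le_one (G : KGraph n k) (x y : Fin n) : G.dist x y ≤ 1 ↔ G.Stp x y := by
  rw [← rch_one, ← dist_le_iff]
  simp

lemma copsWin_of_targets (G : KGraph n k) {m : ℕ} (τ : Fin m → Fin n) (t : ℕ)
    (c : Fin m → Fin n) (r : Fin n) (hc : ∀ i, G.Rch (t + 1) (c i) (τ i))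
    (hr : ∀ u, G.Rch t r u → ∃ i, τ i = u) : CopsWin G c r := by
  induction t generalizing c r with
  | zero =>
    obtain ⟨i, hi⟩ := hr r rfl
    exact CopsWin.stepCaught c τ r
      (fun i => (dist_le_one G _ _).2 ((rch_one G _ _).1 (hc i))) i hi
  | succ t ih =>
    choose c' h1 h2 using hc
    refine CopsWin.step c c' r (fun i => (dist_le_one G _ _).2 (h1 i)) fun r' hr' => ?_
    exact ih c' r' h2 fun u hu => hr u ⟨r', (dist_le_one G _ _).1 hr', hu⟩

open Classical in
lemma copNumber_le (G : KGraph n k) (j m : ℕ) (c : Fin m → Fin n)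
    (hall : ∀ v : Fin n, ∀ A : Finset (Fin n), (∀ u ∈ A, G.Rch j v u) →
      A.card ≤ (Finset.univ.filter fun i => c i ∈ G.vNhd (A : Set (Fin n)) (j + 1)).card) :
    G.copNumber ≤ m := by
  apply Nat.sInf_le
  refine ⟨c, fun r => ?_⟩
  let ι := {u : Fin n // G.Rch j r u}
  let T : ι → Finset (Fin m) := fun u => Finset.univ.filter fun i => G.Rch (j + 1) u.1 (c i)
  have hT : ∀ s : Finset ι, s.card ≤ (s.biUnion T).card := by
    intro s
    have := hall r (s.map (Function.Embedding.subtype _)) (by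
      intro u hu
      obtain ⟨w, -, rfl⟩ := Finset.mem_map.1 hu
      exact w.2)
    rw [Finset.card_map] at this
    refine this.trans (Finset.card_le_card ?_)
    intro i hi
    rw [Finset.mem_filter, mem_vNhd] at hi
    obtain ⟨-, u, hu, hui⟩ := hi
    obtain ⟨w, hw, rfl⟩ := Finset.mem_map.1 (Finset.mem_coe.1 hu)
    exact Finset.mem_biUnion.2 ⟨w, hw, Finset.mem_filter.2 ⟨Finset.mem_univ _, hui⟩⟩
  obtain ⟨f, hf, hfT⟩ := (Finset.all_card_le_biUnion_card_iff_exists_injective T).1 hT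
  refine copsWin_of_targets G (Function.extend f (fun u => u.1) c) j c r ?_ ?_
  · intro i
    by_cases hi : ∃ u, f u = i
    · obtain ⟨u, rfl⟩ := hi
      rw [hf.extend_apply]
      exact Rch.symm G (Finset.mem_filter.1 (hfT u)).2
    · rw [Function.extend_apply' _ _ _ hi]
      exact Rch.mono G (Nat.zero_le _) (show G.Rch 0 _ _ from rfl)
  · intro u hu
    exact ⟨f ⟨u, hu⟩, hf.extend_apply _ _ _⟩

open Classical in
/-- Chernoff-type counting bound. -/
lemma count_bad (hn : 0 < n) (m a : ℕ) (S : Finset (Fin n)) :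
    ((Finset.univ.filter fun c : Fin m → Fin n =>
      (Finset.univ.filter fun i => c i ∈ S).card < a).card : ℝ) ≤
      2 ^ a * ((n : ℝ) ^ m * Real.exp (-(m * (S.card / n) / 2))) := by
  have hn' : (0 : ℝ) < n := by exact_mod_cast hn
  have h1 : (∑ v : Fin n, (if v ∈ S then (1 / 2 : ℝ) else 1)) ^ m =
      ∑ c : Fin m → Fin n, ∏ i, (if c i ∈ S then (1 / 2 : ℝ) else 1) := by
    rw [Fintype.sum_pow]
  have h2 : (∑ v : Fin n, (if v ∈ S then (1 / 2 : ℝ) else 1)) = n * (1 - (S.card / n) / 2) := by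
    have : ∀ v : Fin n, (if v ∈ S then (1 / 2 : ℝ) else 1) = 1 - (if v ∈ S then (1 / 2 : ℝ) else 0) := by
      intro v; split_ifs <;> norm_num
    simp_rw [this]
    rw [Finset.sum_sub_distrib]
    simp
    field_simp
  have h3 : ∀ c : Fin m → Fin n, (∏ i, (if c i ∈ S then (1 / 2 : ℝ) else 1)) =
      (1 / 2) ^ (Finset.univ.filter fun i => c i ∈ S).card := by
    intro c
    rw [Finset.prod_ite]
    simp
  have h4 : ((Finset.univ.filter fun c : Fin m → Fin n =>
      (Finset.univ.filter fun i => c i ∈ S).card < a).card : ℝ) * (1 / 2) ^ a ≤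
      ∑ c : Fin m → Fin n, ∏ i, (if c i ∈ S then (1 / 2 : ℝ) else 1) := by
    rw [← nsmul_eq_mul, ← Finset.sum_const]
    refine le_trans ?_ (Finset.sum_le_sum_of_subset_of_nonneg (Finset.subset_univ (Finset.univ.filter fun c : Fin m → Fin n =>
      (Finset.univ.filter fun i => c i ∈ S).card < a)) ?_)
    · apply Finset.sum_le_sum
      intro c hc
      rw [h3]
      exact pow_le_pow_of_le_one (by norm_num) (by norm_num) (Finset.mem_filter.1 hc).2.le
    · intro c _ _
      rw [h3]
      positivity
  rw [← h1, h2, mul_pow] at h4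
  have hS : (S.card : ℝ) / n ≤ 1 := by
    rw [div_le_one hn']
    have := Finset.card_le_univ S
    rw [Fintype.card_fin] at this
    exact_mod_cast this
  have h5 : (1 - ((S.card : ℝ) / n) / 2) ^ m ≤ Real.exp (-(m * (S.card / n) / 2)) := by
    have : (1 - ((S.card : ℝ) / n) / 2) ≤ Real.exp (-((S.card / n) / 2)) := by
      have := Real.add_one_le_exp (-(((S.card : ℝ) / n) / 2))
      linarith
    calc _ ≤ (Real.exp (-((S.card / n) / 2))) ^ m := pow_le_pow_left₀ (by linarith) this m
      _ = _ := by
        rw [← Real.exp_nat_mul]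
        congr 1
        ring
  have h6 := h4.trans (mul_le_mul_of_nonneg_left h5 (by positivity : (0:ℝ) ≤ (n:ℝ) ^ m))
  have h7 : (2 : ℝ) ^ a * (1 / 2) ^ a = 1 := by
    rw [← mul_pow]; norm_num
  calc _ = 2 ^ a * (((Finset.univ.filter fun c : Fin m → Fin n =>
      (Finset.univ.filter fun i => c i ∈ S).card < a).card : ℝ) * (1 / 2) ^ a) := by
        rw [mul_left_comm, h7, mul_one]
    _ ≤ _ := mul_le_mul_of_nonneg_left h6 (by positivity)

open Classical in
/-- Union bound: if the failure weights sum to less than one then a good placement exists. -/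
lemma exists_good (G : KGraph n k) (hn : 0 < n) (j m : ℕ)
    (hsum : ∑ v : Fin n, ∑ A ∈ ((Finset.univ.filter (G.Rch j v)).powerset.erase ∅),
      (2 : ℝ) ^ A.card * Real.exp (-(m * ((G.vNhd (A : Set (Fin n)) (j + 1)).ncard / n) / 2)) < 1) :
    G.copNumber ≤ m := by
  have hn' : (0 : ℝ) < n := by exact_mod_cast hn
  by_contra hcon
  let P := fun v : Fin n => (Finset.univ.filter (G.Rch j v)).powerset.erase ∅
  let S := fun A : Finset (Fin n) => (G.vNhd (A : Set (Fin n)) (j + 1)).toFinset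
  let Bad := fun A : Finset (Fin n) => Finset.univ.filter fun c : Fin m → Fin n =>
      (Finset.univ.filter fun i => c i ∈ S A).card < A.card
  have hcov : (Finset.univ : Finset (Fin m → Fin n)) ⊆
      Finset.univ.biUnion fun v => (P v).biUnion Bad := by
    intro c _
    by_contra hc
    apply hcon
    refine copNumber_le G j m c fun v A hA => ?_
    by_contra hlt
    rw [not_le] at hlt
    apply hc
    refine Finset.mem_biUnion.2 ⟨v, Finset.mem_univ _, Finset.mem_biUnion.2 ⟨A, ?_, ?_⟩⟩
    · refine Finset.mem_erase.2 ⟨?_, ?_⟩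
      · rintro rfl
        simp at hlt
      · rw [Finset.mem_powerset]
        intro u hu
        exact Finset.mem_filter.2 ⟨Finset.mem_univ _, hA u hu⟩
    · refine Finset.mem_filter.2 ⟨Finset.mem_univ _, ?_⟩
      simpa [S] using hlt
  have h1 : (n : ℝ) ^ m ≤ ∑ v : Fin n, ∑ A ∈ P v, ((Bad A).card : ℝ) := by
    have h2 := Finset.card_le_card hcov
    rw [Finset.card_univ, Fintype.card_fun, Fintype.card_fin, Fintype.card_fin] at h2
    have h3 : n ^ m ≤ ∑ v : Fin n, ∑ A ∈ P v, (Bad A).card :=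
      h2.trans (Finset.card_biUnion_le.trans
        (Finset.sum_le_sum fun v _ => Finset.card_biUnion_le))
    exact_mod_cast h3
  have h2 : ∑ v : Fin n, ∑ A ∈ P v, ((Bad A).card : ℝ) ≤ (n : ℝ) ^ m *
      ∑ v : Fin n, ∑ A ∈ P v,
      (2 : ℝ) ^ A.card * Real.exp (-(m * ((G.vNhd (A : Set (Fin n)) (j + 1)).ncard / n) / 2)) := by
    rw [Finset.mul_sum]
    refine Finset.sum_le_sum fun v _ => ?_
    rw [Finset.mul_sum]
    refine Finset.sum_le_sum fun A _ => ?_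
    have := count_bad hn m A.card (S A)
    have hS : (S A).card = (G.vNhd (A : Set (Fin n)) (j + 1)).ncard := by
      rw [Set.ncard_eq_toFinset_card']
    rw [hS] at this
    refine this.trans (le_of_eq ?_)
    ring
  have h3 : (0 : ℝ) < (n : ℝ) ^ m := by positivity
  have h4 := mul_lt_mul_of_pos_left hsum h3
  linarith [h1.trans h2]

/-- The numerical heart of the union bound. -/
lemma sum_bound (hn : 2 ≤ n) (D : ℝ) (hD : 1 ≤ D) (hlog : Real.log n ≤ 3 * D)
    (N : Fin n → Finset (Fin n)) (hN : ∀ v, ((N v).card : ℝ) ≤ D) (X : Finset (Fin n) → ℝ)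
    (hX : ∀ v, ∀ A ∈ (N v).powerset.erase ∅, 19 * A.card * Real.log n ≤ X A ∨ 19 * D ≤ X A) :
    ∑ v : Fin n, ∑ A ∈ (N v).powerset.erase ∅, (2 : ℝ) ^ A.card * Real.exp (-(X A / 2)) < 1 := by
  have hn2 : (2 : ℝ) ≤ n := by exact_mod_cast hn
  have hn' : (0 : ℝ) < n := by linarith
  have hexp : Real.exp (Real.log n) = n := Real.exp_log hn'
  have he2 : (2 : ℝ) ≤ Real.exp 1 := by linarith [Real.add_one_le_exp (1 : ℝ)]
  have htwo : ∀ v, ∀ A ⊆ N v, (2 : ℝ) ^ A.card ≤ Real.exp D := by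
    intro v A hA
    calc (2 : ℝ) ^ A.card ≤ Real.exp 1 ^ A.card := pow_le_pow_left₀ (by norm_num) he2 _
      _ = Real.exp A.card := by rw [← Real.exp_nat_mul, mul_one]
      _ ≤ Real.exp D := by
        apply Real.exp_le_exp.2
        refine le_trans ?_ (hN v)
        exact_mod_cast Finset.card_le_card hA
  have key : ∀ v, ∀ A ∈ (N v).powerset.erase ∅, (2 : ℝ) ^ A.card * Real.exp (-(X A / 2)) ≤
      (1 / n) ^ 4 * (1 / n) ^ A.card + Real.exp D * Real.exp (-(19 / 2 * D)) := by
    intro v A hA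
    have hA' := hA
    rw [Finset.mem_erase, Finset.mem_powerset] at hA
    have hpos : 1 ≤ A.card := Finset.card_pos.2 (Finset.nonempty_iff_ne_empty.2 hA.1)
    rcases hX v A hA' with h | h
    · have h1 : Real.exp (-(X A / 2)) ≤ (1 / n) ^ (9 * A.card) := by
        have : ((1 : ℝ) / n) ^ (9 * A.card) = Real.exp (-(9 * A.card * Real.log n)) := by
          rw [show -(9 * (A.card : ℝ) * Real.log n) = ((9 * A.card : ℕ) : ℝ) * (-Real.log n) by
            push_cast; ring, Real.exp_nat_mul, Real.exp_neg, hexp, one_div]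
        rw [this]
        apply Real.exp_le_exp.2
        have : 0 ≤ (A.card : ℝ) * Real.log n :=
          mul_nonneg (by positivity) (Real.log_nonneg (by linarith))
        nlinarith
      have h2 : (2 : ℝ) ^ A.card * (1 / n) ^ (9 * A.card) ≤ (1 / n) ^ 4 * (1 / n) ^ A.card := by
        have h3 : (2 : ℝ) ^ A.card * (1 / n) ^ A.card ≤ 1 := by
          rw [← mul_pow]
          apply pow_le_one₀ (by positivity)
          rw [mul_one_div, div_le_one hn']
          exact hn2
        have h1n : (1 : ℝ) / n ≤ 1 := by rw [div_le_one hn']; linarith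
        have h0n : (0 : ℝ) ≤ 1 / n := by positivity
        calc (2 : ℝ) ^ A.card * (1 / n) ^ (9 * A.card)
            = ((2 : ℝ) ^ A.card * (1 / n) ^ A.card) * (1 / n) ^ (8 * A.card) := by
              rw [show 9 * A.card = A.card + 8 * A.card by ring, pow_add]; ring
          _ ≤ 1 * (1 / n) ^ (8 * A.card) := mul_le_mul_of_nonneg_right h3 (by positivity)
          _ ≤ (1 / n) ^ (4 + A.card) := by
              rw [one_mul]
              exact pow_le_pow_of_le_one h0n h1n (by omega)
          _ = _ := pow_add _ _ _
      have := mul_le_mul_of_nonneg_left h1 (by positivity : (0:ℝ) ≤ 2 ^ A.card)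
      have h5 : 0 ≤ Real.exp D * Real.exp (-(19 / 2 * D)) := by positivity
      linarith
    · have h1 : Real.exp (-(X A / 2)) ≤ Real.exp (-(19 / 2 * D)) := by
        apply Real.exp_le_exp.2
        linarith
      have := mul_le_mul (htwo v A hA.2) h1 (by positivity) (by positivity)
      have h5 : (0 : ℝ) ≤ (1 / n) ^ 4 * (1 / n) ^ A.card := by positivity
      linarith
  have inner : ∀ v, ∑ A ∈ (N v).powerset.erase ∅, (2 : ℝ) ^ A.card * Real.exp (-(X A / 2)) ≤
      (1 / n) ^ 4 * 3 + Real.exp D * (Real.exp D * Real.exp (-(19 / 2 * D))) := by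
    intro v
    calc _ ≤ ∑ A ∈ (N v).powerset.erase ∅,
          (((1 : ℝ) / n) ^ 4 * (1 / n) ^ A.card + Real.exp D * Real.exp (-(19 / 2 * D))) :=
          Finset.sum_le_sum (key v)
      _ ≤ ∑ A ∈ (N v).powerset,
          (((1 : ℝ) / n) ^ 4 * (1 / n) ^ A.card + Real.exp D * Real.exp (-(19 / 2 * D))) :=
          Finset.sum_le_sum_of_subset_of_nonneg (Finset.erase_subset _ _)
            (fun _ _ _ => by positivity)
      _ = (1 / n) ^ 4 * (1 / n + 1) ^ (N v).card +
          2 ^ (N v).card * (Real.exp D * Real.exp (-(19 / 2 * D))) := by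
          rw [Finset.sum_add_distrib, ← Finset.mul_sum, Finset.sum_const, Finset.card_powerset,
            nsmul_eq_mul, ← Finset.sum_pow_mul_eq_add_pow]
          simp
      _ ≤ _ := by
          have h3 : ((1 : ℝ) / n + 1) ^ (N v).card ≤ 3 := by
            have hc : ((N v).card : ℝ) ≤ n := by
              have := Finset.card_le_univ (N v)
              rw [Fintype.card_fin] at this
              exact_mod_cast this
            calc ((1 : ℝ) / n + 1) ^ (N v).card ≤ Real.exp (1 / n) ^ (N v).card :=
                  pow_le_pow_left₀ (by positivity) (Real.add_one_le_exp _) _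
              _ = Real.exp ((N v).card * (1 / n)) := by rw [Real.exp_nat_mul]
              _ ≤ Real.exp 1 := by
                  apply Real.exp_le_exp.2
                  rw [mul_one_div, div_le_one hn']
                  exact hc
              _ ≤ 3 := by linarith [Real.exp_one_lt_d9]
          have h4 := htwo v (N v) (Finset.Subset.refl _)
          gcongr
  calc _ ≤ ∑ v : Fin n, ((1 / (n : ℝ)) ^ 4 * 3 +
        Real.exp D * (Real.exp D * Real.exp (-(19 / 2 * D)))) :=
        Finset.sum_le_sum fun v _ => inner v
    _ = 3 * (1 / n) ^ 3 + n * (Real.exp D * (Real.exp D * Real.exp (-(19 / 2 * D)))) := by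
        rw [Finset.sum_const, Finset.card_univ, Fintype.card_fin, nsmul_eq_mul]
        field_simp
    _ ≤ 3 * (1 / 2) ^ 3 + Real.exp (-2) := by
        have h1 : ((1 : ℝ) / n) ^ 3 ≤ (1 / 2) ^ 3 := by gcongr
        have h2 : (n : ℝ) * (Real.exp D * (Real.exp D * Real.exp (-(19 / 2 * D)))) ≤
            Real.exp (-2) := by
          calc (n : ℝ) * (Real.exp D * (Real.exp D * Real.exp (-(19 / 2 * D))))
              = Real.exp (Real.log n + (D + (D + -(19 / 2 * D)))) := by
                rw [Real.exp_add, Real.exp_add, Real.exp_add, hexp]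
            _ ≤ _ := by
                apply Real.exp_le_exp.2
                linarith
        linarith
    _ < 1 := by
        have : Real.exp (-2) ≤ 1 / 3 := by
          rw [Real.exp_neg, inv_eq_one_div]
          apply one_div_le_one_div_of_le (by norm_num)
          linarith [Real.add_one_le_exp (2 : ℝ)]
        norm_num
        linarith

end KGraph

/-- regime (a). -/
theorem cop_number_expanding_regime_a (n k : ℕ) (hk : 2 ≤ k) (ξ : ℝ) (hξ0 : 0 < ξ) (hξ1 : ξ ≤ 1)
    (G : KGraph n k) (hG : G.IsExpanding ξ) (j : ℕ) (hj : 1 ≤ j)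
    (hd1 : (n : ℝ) ^ ((1 : ℝ) / (2 * (j : ℝ) + 1)) ≤ G.avgDeg)
    (hd2 : G.avgDeg ≤ ((n : ℝ) / k) ^ ((1 : ℝ) / (2 * (j : ℝ)))) :
    (G.copNumber : ℝ) ≤ 20 * ξ⁻¹ ^ 2 * G.avgDeg ^ j *
      ((⌈(n : ℝ) / G.avgDeg ^ (2 * j + 1) * Real.log n⌉ : ℤ) : ℝ) := by
  classical
  obtain ⟨hdk, -, hA2, -⟩ := hG
  set d := G.avgDeg with hd
  have hk2 : (2 : ℝ) ≤ k := by exact_mod_cast hk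
  have hd2' : (2 : ℝ) ≤ d := hk2.trans hdk
  have hd0 : 0 < d := by linarith
  have hn0 : 0 < n := by
    rcases Nat.eq_zero_or_pos n with h | h
    · subst h
      have : d = 0 := by rw [hd]; simp [KGraph.avgDeg]
      linarith
    · exact h
  have hn' : (0 : ℝ) < n := by exact_mod_cast hn0
  have hn2 : 2 ≤ n := by
    have hle : d ≤ n := by
      rw [hd, KGraph.avgDeg, div_le_iff₀ hn']
      calc _ ≤ ∑ v : Fin n, (n : ℝ) := by
            refine Finset.sum_le_sum fun v _ => ?_
            have := Set.ncard_le_card (G.vNhd {v} 1)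
            rw [Nat.card_fin] at this
            exact_mod_cast this
        _ = _ := by simp
    have : (2 : ℝ) ≤ n := hd2'.trans hle
    exact_mod_cast this
  have hn2' : (2 : ℝ) ≤ n := by exact_mod_cast hn2
  have hlogpos : 0 < Real.log n := Real.log_pos (by linarith)
  -- `n ≤ d ^ (2 j + 1)`
  have hnd : (n : ℝ) ≤ d ^ (2 * j + 1) := by
    have h1 := pow_le_pow_left₀ (by positivity) hd1 (2 * j + 1)
    rw [← Real.rpow_natCast, ← Real.rpow_mul hn'.le] at h1
    have h2 : (1 : ℝ) / (2 * (j : ℝ) + 1) * ((2 * j + 1 : ℕ) : ℝ) = 1 := by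
      push_cast
      field_simp
    rwa [h2, Real.rpow_one] at h1
  set b : ℝ := ((⌈(n : ℝ) / d ^ (2 * j + 1) * Real.log n⌉ : ℤ) : ℝ) with hb
  have hb1 : 1 ≤ b := by
    have : 0 < ⌈(n : ℝ) / d ^ (2 * j + 1) * Real.log n⌉ := Int.ceil_pos.2 (by positivity)
    rw [hb]
    exact_mod_cast this
  have hblog : (n : ℝ) / d ^ (2 * j + 1) * Real.log n ≤ b := Int.le_ceil _
  have hblog' : Real.log n ≤ b * d ^ (2 * j + 1) / n := by
    rw [le_div_iff₀ hn']
    have := mul_le_mul_of_nonneg_right hblog (by positivity : 0 ≤ d ^ (2 * j + 1))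
    calc Real.log n * n = (n : ℝ) / d ^ (2 * j + 1) * Real.log n * d ^ (2 * j + 1) := by
          field_simp
      _ ≤ _ := this
  have hξi : 1 ≤ ξ⁻¹ := (one_le_inv₀ hξ0).2 hξ1
  set D : ℝ := ξ⁻¹ * d ^ j with hDdef
  have hdj : 1 ≤ d ^ j := one_le_pow₀ (by linarith)
  have hdD : d ^ j ≤ D := by rw [hDdef]; nlinarith
  have hD1 : 1 ≤ D := hdj.trans hdD
  have hlogD : Real.log n ≤ 3 * D := by
    have h1 := Real.log_le_rpow_div hn'.le (by norm_num : (0 : ℝ) < 1 / 3)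
    have h2 : (n : ℝ) ^ ((1 : ℝ) / 3) ≤ d ^ j := by
      have h3 := pow_le_pow_left₀ (by positivity) hd1 j
      rw [← Real.rpow_natCast, ← Real.rpow_mul hn'.le] at h3
      refine le_trans ?_ h3
      apply Real.rpow_le_rpow_of_exponent_le (by linarith)
      have hj' : (1 : ℝ) ≤ j := by exact_mod_cast hj
      rw [div_mul_eq_mul_div, one_mul, div_le_div_iff₀ (by norm_num) (by positivity)]
      linarith
    have h4 : (n : ℝ) ^ ((1 : ℝ) / 3) / (1 / 3) = 3 * (n : ℝ) ^ ((1 : ℝ) / 3) := by ring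
    linarith
  set M : ℝ := 20 * ξ⁻¹ ^ 2 * d ^ j * b with hM
  have hMD : M = 20 * (ξ⁻¹ * D * b) := by rw [hM, hDdef]; ring
  have hW1 : 1 ≤ ξ⁻¹ * D * b := by
    have : 1 ≤ ξ⁻¹ * D := by nlinarith
    nlinarith
  set m : ℕ := ⌊M⌋₊ with hm
  have hmM : (m : ℝ) ≤ M := Nat.floor_le (by rw [hMD]; linarith)
  have hm19 : 19 * (ξ⁻¹ * D * b) ≤ m := by
    have := Nat.lt_floor_add_one M
    rw [← hm] at this
    linarith
  refine le_trans ?_ hmM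
  have hgood : G.copNumber ≤ m := by
    apply KGraph.exists_good G hn0 j m
    refine KGraph.sum_bound hn2 D hD1 hlogD (fun v => Finset.univ.filter (G.Rch j v)) ?_
      (fun A => m * ((G.vNhd (A : Set (Fin n)) (j + 1)).ncard / n)) ?_
    · intro v
      have h1 := (hA2 {v} j hj).2
      have h2 : G.vNhd {v} j = ((Finset.univ.filter (G.Rch j v) : Finset (Fin n)) : Set (Fin n)) := by
        ext u
        simp [KGraph.mem_vNhd]
      rw [h2, Set.ncard_coe_finset, Set.ncard_singleton] at h1
      simpa [hDdef] using h1
    · intro v A hA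
      have h1 := (hA2 (A : Set (Fin n)) (j + 1) (by omega)).1
      rw [Set.ncard_coe_finset] at h1
      set s : ℝ := ((G.vNhd (A : Set (Fin n)) (j + 1)).ncard : ℝ) with hs
      have hs0 : 0 ≤ s / n := by positivity
      have hms : 19 * (ξ⁻¹ * D * b) * (s / n) ≤ m * (s / n) :=
        mul_le_mul_of_nonneg_right hm19 hs0
      rcases min_cases ((A.card : ℝ) * d ^ (j + 1)) (n : ℝ) with ⟨h2, -⟩ | ⟨h2, -⟩
      · left
        rw [h2] at h1
        refine le_trans ?_ hms
        have h3 : ξ * ((A.card : ℝ) * d ^ (j + 1)) / n ≤ s / n := by gcongr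
        have h4 : 19 * (ξ⁻¹ * D * b) * (ξ * ((A.card : ℝ) * d ^ (j + 1)) / n) ≤
            19 * (ξ⁻¹ * D * b) * (s / n) := by gcongr
        refine le_trans ?_ h4
        have h5 : 19 * (ξ⁻¹ * D * b) * (ξ * ((A.card : ℝ) * d ^ (j + 1)) / n) =
            19 * A.card * (b * d ^ (2 * j + 1) / n) * ξ⁻¹ := by
          rw [hDdef, show 2 * j + 1 = j + (j + 1) by ring, pow_add d j (j + 1)]
          field_simp
        rw [h5]
        calc 19 * (A.card : ℝ) * Real.log n ≤ 19 * A.card * (b * d ^ (2 * j + 1) / n) := by gcongr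
          _ ≤ _ := le_mul_of_one_le_right (by positivity) hξi
      · right
        rw [h2] at h1
        refine le_trans ?_ hms
        have h3 : ξ ≤ s / n := by rwa [le_div_iff₀ hn']
        have h4 : 19 * (ξ⁻¹ * D * b) * ξ ≤ 19 * (ξ⁻¹ * D * b) * (s / n) := by gcongr
        refine le_trans ?_ h4
        have h5 : 19 * (ξ⁻¹ * D * b) * ξ = 19 * D * b := by field_simp
        rw [h5]
        exact le_mul_of_one_le_right (by positivity) hb1
  exact_mod_cast hgood
end
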